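/- Let β > 1 and j < 0. There exist ℓ_j ∈ (0, ∞) and continuous, strictly increasing functions m_j : (0, ℓ_j) → [m_β, 1) and h_j : (0, ℓ_j) → [0, ∞) such that for every x ∈ (0, ℓ_j) one has h_j(x) = ∫₀ˣ (−j)/χ(m_j(y)) dy and m_j(x) = tanh(β(m_j(x) + h_j(x))), and such that m_j(x) → 1 and h_j(x) → +∞ as x → ℓ_j⁻ (the solution on (−ℓ_j, 0) is obtained by odd reflection). Moreover ℓ_j → 0 as |j| → ∞ and ℓ_j → ∞ as j → 0. -/

import Mathlib

open MeasureTheory Set Filter Topology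

noncomputable section

/-- The Neumann reflection kernel of `J` on the interval `[a, b]`:
`J^neum(x,y) = Σ_z J(x - z)`, the sum running over the images `z` of `y` under
iterated reflections of `[a,b]` about its endpoints. -/
def Jneum (J : ℝ → ℝ) (a b x y : ℝ) : ℝ :=
  ∑' k : ℤ, (J (x - (y + 2 * (k : ℝ) * (b - a))) + J (x - (2 * a - y + 2 * (k : ℝ) * (b - a))))

/-- Neumann convolution `(J^neum * f)(x) = ∫_a^b J^neum(x,y) f(y) dy`. -/
def convN (J : ℝ → ℝ) (a b : ℝ) (f : ℝ → ℝ) (x : ℝ) : ℝ :=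
  ∫ y in a..b, Jneum J a b x y * f y

/-- the mobility `χ(m) = β (1 - m²)` -/
def chi (β m : ℝ) : ℝ := β * (1 - m ^ 2)

/-- odd (antisymmetric) function -/
def OddFn (f : ℝ → ℝ) : Prop := ∀ x, f (-x) = - f x

/-- `J` is a smooth, even probability density supported in `[-1,1]`. -/
def KernelJ (J : ℝ → ℝ) : Prop :=
  ContDiff ℝ (⊤ : ℕ∞) J ∧ (∀ x, J (-x) = J x) ∧ (∀ x, 0 ≤ J x) ∧
    (∀ x, 1 < |x| → J x = 0) ∧ (∫ x, J x) = 1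

/-- `p_{h,m}(x) = β / cosh²(β (J^neum*m)(x) + β h(x))` -/
def pfun (β : ℝ) (J : ℝ → ℝ) (a b : ℝ) (h m : ℝ → ℝ) (x : ℝ) : ℝ :=
  β / Real.cosh (β * convN J a b m x + β * h x) ^ 2

/-- `A_{h,m} ψ = p_{h,m} · (J^neum * ψ)` -/
def Aop (β : ℝ) (J : ℝ → ℝ) (a b : ℝ) (h m : ℝ → ℝ) (ψ : ℝ → ℝ) : ℝ → ℝ :=
  fun x => pfun β J a b h m x * convN J a b ψ x

/-- maximal (Perron-Frobenius) eigenvalue / positive eigenvector pair of `A_{h,m}`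
on `[a,b]`, normalized in `L²([a,b], p_{h,m}⁻¹ dx)`. -/
def MaxEigen (β : ℝ) (J : ℝ → ℝ) (a b : ℝ) (h m : ℝ → ℝ) (lam : ℝ) (u : ℝ → ℝ) : Prop :=
  (∀ x ∈ Icc a b, 0 < u x) ∧
  (∀ x ∈ Icc a b, Aop β J a b h m u x = lam * u x) ∧
  (∫ x in a..b, u x ^ 2 / pfun β J a b h m x) = 1 ∧
  (∀ (lam' : ℝ) (v : ℝ → ℝ) (C : ℝ), (∀ x ∈ Icc a b, |v x| ≤ C) →
    (∃ x ∈ Icc a b, v x ≠ 0) →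
    (∀ x ∈ Icc a b, Aop β J a b h m v x = lam' * v x) → lam' ≤ lam)

/-- the instanton `m̄` (with derivative `m̄' = mbar'`) and its properties. -/
def Instanton (β mβ cb ab : ℝ) (J mbar mbar' : ℝ → ℝ) : Prop :=
  OddFn mbar ∧ StrictMono mbar ∧ (∀ x, HasDerivAt mbar (mbar' x) x) ∧
  (∀ x, mbar x = Real.tanh (β * ∫ y, J (x - y) * mbar y)) ∧
  Tendsto mbar atTop (𝓝 mβ) ∧ Tendsto mbar atBot (𝓝 (-mβ)) ∧
  (∀ x, 0 ≤ x → 0 < mβ - mbar x ∧ mβ - mbar x ≤ cb * Real.exp (-ab * x) ∧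
    0 < mbar' x ∧ mbar' x ≤ cb * Real.exp (-ab * x))

/-- the operator `Ā ψ = β(1-m̄²)·(J*ψ)` on the whole line -/
def AbarOp (β : ℝ) (J mbar : ℝ → ℝ) : (ℝ → ℝ) → (ℝ → ℝ) :=
  fun ψ x => β * (1 - mbar x ^ 2) * ∫ y, J (x - y) * ψ y

/-- the macroscopic solution `u : [0,ℓ] → [m_β, 1)` with current `j` -/
def MacroSol (β mβ j ℓ : ℝ) (u : ℝ → ℝ) : Prop :=
  (∃ b < (1:ℝ), ∀ r ∈ Icc (0:ℝ) ℓ, mβ ≤ u r ∧ u r ≤ b) ∧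
  (∀ r ∈ Icc (0:ℝ) ℓ, u r = Real.tanh (β * (u r + ∫ y in (0:ℝ)..r, (-j) / chi β (u y))))

/-- Section 3 data at scale `ε`: `x_ε`, `ξ_ε = x_ε + 2n₀`, `m₀`, `h₀`. -/
def Sec3Data (β mβ ℓ ε : ℝ) (J mbar u m0 h0 : ℝ → ℝ) (xε ξε : ℝ) (n0 : ℕ) : Prop :=
  mbar xε = mβ - ε ∧ ξε = xε + 2 * n0 ∧ OddFn m0 ∧ OddFn h0 ∧
  (∀ x ∈ Icc (0:ℝ) ξε, m0 x = mbar x) ∧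
  (∀ x ∈ Ioc ξε (ℓ / ε), m0 x = u (ε * (x - ξε))) ∧
  (∀ x ∈ Icc (-(ℓ/ε)) (ℓ/ε),
    h0 x = (2*β)⁻¹ * Real.log ((1 + m0 x) / (1 - m0 x)) - convN J (-(ℓ/ε)) (ℓ/ε) m0 x)

/-- membership in the set `𝒜` (with its ε-independent parameters). -/
def MemA (β : ℝ) (J : ℝ → ℝ) (j x0 ε r a1 C1 c1 C2 c2 C0' : ℝ) (mbar : ℝ → ℝ)
    (h m : ℝ → ℝ) : Prop :=
  (∀ x ∈ Icc (-ε⁻¹) ε⁻¹, m x = Real.tanh (β * convN J (-ε⁻¹) ε⁻¹ m x + β * h x)) ∧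
  (∀ x ∈ Icc (-ε⁻¹) ε⁻¹, |h x| ≤ C2) ∧
  (∀ x ∈ Icc (-ε⁻¹) ε⁻¹, r ≤ |x - ε⁻¹ * x0| → β * (1 - m x ^ 2) ≤ Real.exp (-(2*a1))) ∧
  (∀ x ∈ Icc (-ε⁻¹) ε⁻¹, |x - ε⁻¹*x0| ≤ 2*C0'*Real.log ε⁻¹ →
    |m x - mbar (x - ε⁻¹*x0)| ≤ c1 * ε * Real.log ε⁻¹) ∧
  ∃ m' h' : ℝ → ℝ, (∀ x, HasDerivAt m (m' x) x) ∧ (∀ x, HasDerivAt h (h' x) x) ∧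
    (∀ x ∈ Icc (-ε⁻¹) ε⁻¹, |m' x| ≤ C1) ∧ (∀ x ∈ Icc (-ε⁻¹) ε⁻¹, |h' x| ≤ C2) ∧
    (∀ x ∈ Icc (-ε⁻¹) ε⁻¹, |x - ε⁻¹*x0| ≤ 2*C0'*Real.log ε⁻¹ →
      |h' x - (-(ε*j)) / (β * (1 - mbar (x - ε⁻¹*x0) ^ 2))| ≤ c2 * ε^2 * Real.log ε⁻¹)

/-- the δ-ball of the set `𝒜` -/
def InBallA (β : ℝ) (J : ℝ → ℝ) (j x0 ε r a1 C1 c1 C2 c2 C0' : ℝ) (mbar : ℝ → ℝ)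
    (δ : ℝ) (h m : ℝ → ℝ) : Prop :=
  ∃ h0 m0 : ℝ → ℝ, MemA β J j x0 ε r a1 C1 c1 C2 c2 C0' mbar h0 m0 ∧
    ∀ x ∈ Icc (-ε⁻¹) ε⁻¹, |h x - h0 x| ≤ δ ∧ |m x - m0 x| ≤ δ

/-- the weight `E_ε` in the norm `N` -/
def Efun (ε x0 a am x : ℝ) : ℝ :=
  if ε⁻¹ * x0 ≤ x then Real.exp (a * (ε⁻¹ - x)) else Real.exp (am * (x + ε⁻¹))

/-- membership in the set `𝒢` -/
def MemG (x0 ε a am b0 : ℝ) (hε hεd ustar : ℝ → ℝ) (h : ℝ → ℝ) : Prop :=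
  (∀ x ∈ Icc (-ε⁻¹) ε⁻¹, Efun ε x0 a am x * |h x - hε x| ≤ b0) ∧
  (∫ x in (-ε⁻¹)..ε⁻¹, h x * ustar x) = 0 ∧
  ∃ hd : ℝ → ℝ, (∀ x, HasDerivAt h (hd x) x) ∧
    (∀ x ∈ Icc (-ε⁻¹) ε⁻¹, |hd x - hεd x| ≤ ε) ∧
    (∀ x ∈ Icc (-ε⁻¹) ε⁻¹, |x - ε⁻¹*x0| ≤ (Real.log ε⁻¹)^2 → |hd x - hεd x| ≤ ε^2)

/-- the antisymmetric solution `(h*, m*)` of Theorem 2.1 on `ε⁻¹[-1, ℓ*]`, `ℓ* = 1+2x₀`,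
antisymmetric about `ε⁻¹ x₀`. -/
def StarSol (β j x0 ε : ℝ) (J hs ms : ℝ → ℝ) : Prop :=
  (∀ x ∈ Icc (-ε⁻¹) (ε⁻¹ * (1 + 2*x0)),
    ms x = Real.tanh (β * convN J (-ε⁻¹) (ε⁻¹ * (1 + 2*x0)) ms x + β * hs x) ∧
    hs x = ∫ y in (ε⁻¹*x0)..x, (-(ε*j)) / chi β (ms y)) ∧
  (∀ x, ms (2*(ε⁻¹*x0) - x) = - ms x) ∧ (∀ x, hs (2*(ε⁻¹*x0) - x) = - hs x)

/-- the boundary correction `R_ε` -/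
def Reps (J ms : ℝ → ℝ) (ε : ℝ) (x : ℝ) : ℝ :=
  ∫ y in ε⁻¹..(ε⁻¹+1), J (x - y) * (ms y - ms (2*ε⁻¹ - y))

end

/-!
The equation is solved by separation of variables. The constraint `m = tanh (β (m + h))` says that
`h = H m` with `H m = artanh m / β - m`, and `H' = 1 / χ - 1`. Differentiating `h = ∫ -j / χ(m)`
gives the autonomous equation `(1 - χ(m)) m' = -j`: a point moving through the magnetizations spends
the time `(1 - χ(s)) / (-j) ds` around `s`. This is positive above `mβ`, because `t ≤ sinh t` at
`t = β mβ` gives `χ(mβ) ≤ 1`; hence `m_j` is the inverse of the travel time from `mβ`, and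
`ℓ_j = ∫ (1 - χ(s)) / (-j) ds` over `[mβ, 1]` is the finite time at which `m_j` reaches `1`, where
`H` blows up.
-/

noncomputable section

theorem continuousOn_image_of_isCompact_of_leftInvOn {X Y : Type*} [TopologicalSpace X]
    [TopologicalSpace Y] [T2Space Y] {f : X → Y} {g : Y → X} {s : Set X} (hs : IsCompact s)
    (hf : ContinuousOn f s) (hg : LeftInvOn g f s) : ContinuousOn g (f '' s) := by
  refine continuousOn_iff_isClosed.2 fun t ht =>
    ⟨f '' (s ∩ t), ((hs.inter_right ht).image_of_continuousOn
      (hf.mono inter_subset_left)).isClosed, ?_⟩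
  rw [← hg.image_inter', inter_comm t s, inter_eq_left.2 (image_mono inter_subset_left)]

/-! ### Autonomous equations by separation of variables -/

/-- The time needed to travel from `a` to `x` when the unit of length around `s` takes the time
`g s`, that is, along a solution of `g (u t) * u' t = 1`. -/
def travelTime (g : ℝ → ℝ) (a x : ℝ) : ℝ := ∫ s in a..x, g s

/-- The solution of `g (u t) * u' t = 1`, `u 0 = a`, until it reaches `b`: the inverse of the travel
time from `a`. Only the times `0 ≤ t ≤ travelTime g a b` are meaningful. -/
def travelPosition (g : ℝ → ℝ) (a b : ℝ) : ℝ → ℝ := Function.invFunOn (travelTime g a) (Icc a b)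

/-- `g` is a slowness (reciprocal of a velocity) under which one moves from `a` up to `b` in finite
time. It may vanish at the endpoints. -/
structure IsSlowness (g : ℝ → ℝ) (a b : ℝ) : Prop where
  lt : a < b
  continuousOn : ContinuousOn g (Icc a b)
  pos : ∀ s ∈ Ioo a b, 0 < g s

namespace IsSlowness

variable {g : ℝ → ℝ} {a b t x : ℝ}

theorem intervalIntegrable (hg : IsSlowness g a b) : IntervalIntegrable g volume a b :=
  hg.continuousOn.intervalIntegrable_of_Icc hg.lt.le

theorem travelTime_pos (hg : IsSlowness g a b) : 0 < travelTime g a b :=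
  intervalIntegral.intervalIntegral_pos_of_pos_on hg.intervalIntegrable hg.pos hg.lt

theorem continuousOn_travelTime (hg : IsSlowness g a b) :
    ContinuousOn (travelTime g a) (Icc a b) := by
  rw [← uIcc_of_le hg.lt.le]
  exact intervalIntegral.continuousOn_primitive_interval' hg.intervalIntegrable left_mem_uIcc

theorem hasDerivAt_travelTime (hg : IsSlowness g a b) (hx : x ∈ Ioo a b) :
    HasDerivAt (travelTime g a) (g x) x := by
  have hg_open : ContinuousOn g (Ioo a b) := hg.continuousOn.mono Ioo_subset_Icc_self
  refine intervalIntegral.integral_hasDerivAt_right (hg.intervalIntegrable.mono_set ?_)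
    (hg_open.stronglyMeasurableAtFilter isOpen_Ioo x hx)
    (hg_open.continuousAt (isOpen_Ioo.mem_nhds hx))
  exact uIcc_subset_uIcc_left (Icc_subset_uIcc (Ioo_subset_Icc_self hx))

theorem strictMonoOn_travelTime (hg : IsSlowness g a b) :
    StrictMonoOn (travelTime g a) (Icc a b) := by
  refine strictMonoOn_of_deriv_pos (convex_Icc a b) hg.continuousOn_travelTime fun x hx => ?_
  rw [interior_Icc] at hx
  simpa only [(hg.hasDerivAt_travelTime hx).deriv] using hg.pos x hx

theorem image_travelTime (hg : IsSlowness g a b) :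
    travelTime g a '' Icc a b = Icc 0 (travelTime g a b) := by
  rw [hg.continuousOn_travelTime.image_Icc_of_monotoneOn hg.lt.le
    hg.strictMonoOn_travelTime.monotoneOn, travelTime, intervalIntegral.integral_same]

theorem bijOn_travelTime (hg : IsSlowness g a b) :
    BijOn (travelTime g a) (Icc a b) (Icc 0 (travelTime g a b)) :=
  hg.image_travelTime ▸ hg.strictMonoOn_travelTime.injOn.bijOn_image

theorem invOn_travelPosition (hg : IsSlowness g a b) :
    InvOn (travelPosition g a b) (travelTime g a) (Icc a b) (Icc 0 (travelTime g a b)) :=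
  hg.bijOn_travelTime.invOn_invFunOn

theorem mapsTo_travelPosition (hg : IsSlowness g a b) :
    MapsTo (travelPosition g a b) (Icc 0 (travelTime g a b)) (Icc a b) :=
  hg.bijOn_travelTime.surjOn.mapsTo_invFunOn

theorem travelPosition_zero (hg : IsSlowness g a b) : travelPosition g a b 0 = a := by
  simpa only [travelTime, intervalIntegral.integral_same] using
    hg.invOn_travelPosition.1 (left_mem_Icc.2 hg.lt.le)

theorem travelPosition_travelTime (hg : IsSlowness g a b) :
    travelPosition g a b (travelTime g a b) = b :=
  hg.invOn_travelPosition.1 (right_mem_Icc.2 hg.lt.le)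

theorem strictMonoOn_travelPosition (hg : IsSlowness g a b) :
    StrictMonoOn (travelPosition g a b) (Icc 0 (travelTime g a b)) := fun t ht u hu htu => by
  rw [← hg.strictMonoOn_travelTime.lt_iff_lt (hg.mapsTo_travelPosition ht)
    (hg.mapsTo_travelPosition hu)]
  rwa [hg.invOn_travelPosition.2 ht, hg.invOn_travelPosition.2 hu]

theorem continuousOn_travelPosition (hg : IsSlowness g a b) :
    ContinuousOn (travelPosition g a b) (Icc 0 (travelTime g a b)) :=
  hg.image_travelTime ▸ continuousOn_image_of_isCompact_of_leftInvOn isCompact_Icc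
    hg.continuousOn_travelTime hg.invOn_travelPosition.1

theorem tendsto_travelPosition (hg : IsSlowness g a b) :
    Tendsto (travelPosition g a b) (𝓝[<] travelTime g a b) (𝓝 b) := by
  have hT := hg.continuousOn_travelPosition _ (right_mem_Icc.2 hg.travelTime_pos.le)
  rw [ContinuousWithinAt, hg.travelPosition_travelTime,
    nhdsWithin_Icc_eq_nhdsLE hg.travelTime_pos] at hT
  exact hT.mono_left (nhdsWithin_mono _ Iio_subset_Iic_self)

theorem travelPosition_mem_Ico (hg : IsSlowness g a b) (ht : t ∈ Ico 0 (travelTime g a b)) :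
    travelPosition g a b t ∈ Ico a b := by
  have ht' : t ∈ Icc 0 (travelTime g a b) := Ico_subset_Icc_self ht
  refine ⟨(hg.mapsTo_travelPosition ht').1, ?_⟩
  simpa only [hg.travelPosition_travelTime] using
    hg.strictMonoOn_travelPosition ht' (right_mem_Icc.2 hg.travelTime_pos.le) ht.2

theorem travelPosition_mem_Ioo (hg : IsSlowness g a b) (ht : t ∈ Ioo 0 (travelTime g a b)) :
    travelPosition g a b t ∈ Ioo a b := by
  refine ⟨?_, (hg.travelPosition_mem_Ico (Ioo_subset_Ico_self ht)).2⟩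
  simpa only [hg.travelPosition_zero] using hg.strictMonoOn_travelPosition
    (left_mem_Icc.2 hg.travelTime_pos.le) (Ioo_subset_Icc_self ht) ht.1

theorem hasDerivAt_travelPosition (hg : IsSlowness g a b) (ht : t ∈ Ioo 0 (travelTime g a b)) :
    HasDerivAt (travelPosition g a b) (g (travelPosition g a b t))⁻¹ t := by
  have hu := hg.travelPosition_mem_Ioo ht
  have hnhds : Icc 0 (travelTime g a b) ∈ 𝓝 t := Icc_mem_nhds ht.1 ht.2
  refine (hg.hasDerivAt_travelTime hu).of_local_left_inverse
    (hg.continuousOn_travelPosition.continuousAt hnhds) (hg.pos _ hu).ne' ?_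
  filter_upwards [hnhds] with u hu using hg.invOn_travelPosition.2 hu

end IsSlowness

/-! ### The mean-field relation between magnetization and magnetic field -/

theorem hasDerivAt_artanh {x : ℝ} (hx : x ∈ Ioo (-1) 1) :
    HasDerivAt Real.artanh (1 - x ^ 2)⁻¹ x := by
  have hsub : 1 - x ≠ 0 := (sub_pos.2 hx.2).ne'
  have hadd : 1 + x ≠ 0 := by linarith [hx.1]
  have hsq : 1 - x ^ 2 ≠ 0 := by
    rw [show 1 - x ^ 2 = (1 - x) * (1 + x) by ring]
    exact mul_ne_zero hsub hadd
  have hlog := ((((hasDerivAt_id x).const_add 1).div ((hasDerivAt_id x).const_sub 1) hsub).log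
    (div_ne_zero hadd hsub)).const_mul (1 / 2)
  refine (hlog.congr_deriv ?_).congr_of_eventuallyEq ?_
  · simp only [id, Pi.div_apply]
    field_simp
    ring
  · filter_upwards [Ioo_mem_nhds hx.1 hx.2] with y hy
    exact Real.artanh_eq_half_log (Ioo_subset_Icc_self hy)

theorem tendsto_artanh_atTop : Tendsto Real.artanh (𝓝[<] 1) atTop := by
  refine tendsto_atTop.2 fun A => ?_
  filter_upwards [Ioo_mem_nhdsLT (Real.tanh_lt_one A)] with x hx
  simpa only [Real.artanh_tanh] using
    Real.artanh_le_artanh (Real.neg_one_lt_tanh A) hx.2 hx.1.le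

/-- The magnetic field `h` solving the mean-field equation `m = tanh (β (m + h))`, for `|m| < 1`. -/
def magneticField (β m : ℝ) : ℝ := Real.artanh m / β - m

section

variable {β m : ℝ}

theorem tanh_mul_add_magneticField (hβ : β ≠ 0) (hm : m ∈ Ioo (-1) 1) :
    Real.tanh (β * (m + magneticField β m)) = m := by
  rw [magneticField, add_sub_cancel, mul_div_cancel₀ _ hβ, Real.tanh_artanh hm]

theorem magneticField_eq_zero_of_eq_tanh (hβ : β ≠ 0) (hm : m = Real.tanh (β * m)) :
    magneticField β m = 0 := by
  have hartanh : Real.artanh m = β * m := by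
    rw [hm, Real.artanh_tanh, ← hm]
  rw [magneticField, hartanh, mul_div_cancel_left₀ _ hβ, sub_self]

theorem hasDerivAt_magneticField (hm : m ∈ Ioo (-1) 1) :
    HasDerivAt (magneticField β) ((chi β m)⁻¹ - 1) m := by
  refine (((hasDerivAt_artanh hm).div_const β).sub (hasDerivAt_id m)).congr_deriv ?_
  rw [chi, mul_inv, div_eq_inv_mul]

theorem tendsto_magneticField_atTop (hβ : 0 < β) :
    Tendsto (magneticField β) (𝓝[<] 1) atTop :=
  (tendsto_artanh_atTop.atTop_div_const hβ).atTop_add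
    (tendsto_neg 1 |>.mono_left nhdsWithin_le_nhds)

theorem chi_pos (hβ : 0 < β) (hm : m ∈ Ioo (-1) 1) : 0 < chi β m :=
  mul_pos hβ (sub_pos.2 ((sq_lt_one_iff_abs_lt_one m).2 (abs_lt.2 hm)))

theorem strictAntiOn_chi (hβ : 0 < β) : StrictAntiOn (chi β) (Ici 0) := fun m hm n _ hmn => by
  have hsq : m ^ 2 < n ^ 2 := pow_lt_pow_left₀ hmn hm two_ne_zero
  exact mul_lt_mul_of_pos_left (sub_lt_sub_left hsq 1) hβ

theorem continuous_chi : Continuous (chi β) := by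
  unfold chi
  fun_prop

theorem chi_le_one_of_eq_tanh (hβ : 0 < β) (hm₀ : 0 < m) (hm : m = Real.tanh (β * m)) :
    chi β m ≤ 1 := by
  have hsinh : m * Real.cosh (β * m) = Real.sinh (β * m) := by
    rwa [Real.tanh_eq_sinh_div_cosh, eq_div_iff (Real.cosh_pos _).ne'] at hm
  have hβ_le : β ≤ Real.cosh (β * m) ^ 2 := by
    refine le_of_mul_le_mul_right ?_ hm₀
    calc β * m ≤ Real.sinh (β * m) := Real.self_le_sinh_iff.2 (mul_pos hβ hm₀).le
      _ = Real.cosh (β * m) * m := by rw [← hsinh, mul_comm]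
      _ ≤ Real.cosh (β * m) ^ 2 * m := by
        gcongr
        exact le_self_pow₀ (Real.one_le_cosh _) two_ne_zero
  calc chi β m ≤ Real.cosh (β * m) ^ 2 * (1 - m ^ 2) :=
        mul_le_mul_of_nonneg_right hβ_le (sub_nonneg.2 (hm ▸ Real.tanh_sq_lt_one _).le)
    _ = Real.cosh (β * m) ^ 2 - Real.sinh (β * m) ^ 2 := by rw [← hsinh]; ring
    _ = 1 := Real.cosh_sq_sub_sinh_sq _

end

/-- `c` is a nonnegative magnetization on or above the spinodal point, where `χ = 1`; there the
magnetic field increases with the magnetization. -/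
structure IsStableMagnetization (β c : ℝ) : Prop where
  beta_pos : 0 < β
  nonneg : 0 ≤ c
  lt_one : c < 1
  chi_le_one : chi β c ≤ 1

theorem isStableMagnetization_of_eq_tanh {β m : ℝ} (hβ : 0 < β) (hm₀ : 0 < m)
    (hm : m = Real.tanh (β * m)) : IsStableMagnetization β m :=
  ⟨hβ, hm₀.le, hm ▸ Real.tanh_lt_one _, chi_le_one_of_eq_tanh hβ hm₀ hm⟩

/-! ### The stationary Stefan problem -/

/-- The slowness `dx/dm` along a solution of the Stefan equation `(1 - χ(m)) m' = -j`. -/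
def stefanSlowness (β j m : ℝ) : ℝ := (1 - chi β m) / (-j)

/-- The half-length `ℓ_j` of the maximal interval of existence of the solution with
`m_j(0) = c`. -/
def stefanLength (β c j : ℝ) : ℝ := travelTime (stefanSlowness β j) c 1

/-- The magnetization `m_j` of the maximal solution with `m_j(0) = c`; only its values on
`[0, ℓ_j]` are meaningful. -/
def stefanMagnetization (β c j : ℝ) : ℝ → ℝ := travelPosition (stefanSlowness β j) c 1

/-- The magnetic field `h_j` of the maximal solution with `m_j(0) = c`; only its values on
`[0, ℓ_j)` are meaningful. -/
def stefanField (β c j x : ℝ) : ℝ := magneticField β (stefanMagnetization β c j x)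

theorem stefanLength_eq_div (β c j : ℝ) :
    stefanLength β c j = (∫ s in c..1, (1 - chi β s)) / (-j) :=
  intervalIntegral.integral_div _ _

theorem tendsto_stefanLength_atBot (β c : ℝ) : Tendsto (stefanLength β c) atBot (𝓝 0) := by
  simp only [funext (stefanLength_eq_div β c)]
  exact tendsto_const_nhds.div_atTop tendsto_neg_atBot_atTop

namespace IsStableMagnetization

variable {β c j m x : ℝ}

theorem mem_Ioo (hc : IsStableMagnetization β c) (hm : m ∈ Ico c 1) : m ∈ Ioo (-1) 1 :=
  ⟨by linarith [hc.nonneg, hm.1], hm.2⟩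

theorem chi_lt_one (hc : IsStableMagnetization β c) (hm : c < m) : chi β m < 1 :=
  (strictAntiOn_chi hc.beta_pos hc.nonneg (hc.nonneg.trans hm.le) hm).trans_le hc.chi_le_one

theorem strictMonoOn_magneticField (hc : IsStableMagnetization β c) :
    StrictMonoOn (magneticField β) (Ico c 1) := by
  refine strictMonoOn_of_deriv_pos (convex_Ico c 1) (fun m hm =>
    (hasDerivAt_magneticField (hc.mem_Ioo hm)).continuousAt.continuousWithinAt) fun m hm => ?_
  rw [interior_Ico] at hm
  have hm' := hc.mem_Ioo (Ioo_subset_Ico_self hm)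
  rw [(hasDerivAt_magneticField hm').deriv, sub_pos]
  exact (one_lt_inv₀ (chi_pos hc.beta_pos hm')).2 (hc.chi_lt_one hm.1)

theorem isSlowness (hc : IsStableMagnetization β c) (hj : j < 0) :
    IsSlowness (stefanSlowness β j) c 1 where
  lt := hc.lt_one
  continuousOn := ((continuous_const.sub continuous_chi).div_const _).continuousOn
  pos _ hs := div_pos (sub_pos.2 (hc.chi_lt_one hs.1)) (neg_pos.2 hj)

theorem stefanLength_pos (hc : IsStableMagnetization β c) (hj : j < 0) : 0 < stefanLength β c j :=
  (hc.isSlowness hj).travelTime_pos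

theorem tendsto_stefanLength_nhdsLT_zero (hc : IsStableMagnetization β c) :
    Tendsto (stefanLength β c) (𝓝[<] 0) atTop := by
  have hpos : 0 < ∫ s in c..1, (1 - chi β s) := by
    simpa only [stefanLength_eq_div, neg_neg, div_one] using hc.stefanLength_pos neg_one_lt_zero
  have hneg : Tendsto (fun j : ℝ => -j) (𝓝[<] 0) (𝓝[>] 0) := by
    simpa only [neg_zero] using tendsto_neg_nhdsLT (a := (0 : ℝ))
  simp only [funext (stefanLength_eq_div β c), div_eq_mul_inv]
  exact (tendsto_inv_nhdsGT_zero.comp hneg).const_mul_atTop hpos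

theorem stefanMagnetization_mem_Ico (hc : IsStableMagnetization β c) (hj : j < 0)
    (hx : x ∈ Ico 0 (stefanLength β c j)) : stefanMagnetization β c j x ∈ Ico c 1 :=
  (hc.isSlowness hj).travelPosition_mem_Ico hx

theorem strictMonoOn_stefanMagnetization (hc : IsStableMagnetization β c) (hj : j < 0) :
    StrictMonoOn (stefanMagnetization β c j) (Ico 0 (stefanLength β c j)) :=
  (hc.isSlowness hj).strictMonoOn_travelPosition.mono Ico_subset_Icc_self

theorem continuousOn_stefanMagnetization (hc : IsStableMagnetization β c) (hj : j < 0) :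
    ContinuousOn (stefanMagnetization β c j) (Ico 0 (stefanLength β c j)) :=
  (hc.isSlowness hj).continuousOn_travelPosition.mono Ico_subset_Icc_self

theorem tendsto_stefanMagnetization (hc : IsStableMagnetization β c) (hj : j < 0) :
    Tendsto (stefanMagnetization β c j) (𝓝[<] stefanLength β c j) (𝓝 1) :=
  (hc.isSlowness hj).tendsto_travelPosition

theorem strictMonoOn_stefanField (hc : IsStableMagnetization β c) (hj : j < 0) :
    StrictMonoOn (stefanField β c j) (Ico 0 (stefanLength β c j)) :=
  hc.strictMonoOn_magneticField.comp (hc.strictMonoOn_stefanMagnetization hj)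
    fun _ => hc.stefanMagnetization_mem_Ico hj

theorem continuousOn_stefanField (hc : IsStableMagnetization β c) (hj : j < 0) :
    ContinuousOn (stefanField β c j) (Ico 0 (stefanLength β c j)) := fun x hx =>
  (hasDerivAt_magneticField (hc.mem_Ioo
    (hc.stefanMagnetization_mem_Ico hj hx))).continuousAt.comp_continuousWithinAt
    (hc.continuousOn_stefanMagnetization hj x hx)

theorem tendsto_stefanField_atTop (hc : IsStableMagnetization β c) (hj : j < 0) :
    Tendsto (stefanField β c j) (𝓝[<] stefanLength β c j) atTop := by
  refine (tendsto_magneticField_atTop hc.beta_pos).comp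
    (tendsto_nhdsWithin_iff.2 ⟨hc.tendsto_stefanMagnetization hj, ?_⟩)
  filter_upwards [Ico_mem_nhdsLT (hc.stefanLength_pos hj)] with x hx
  exact (hc.stefanMagnetization_mem_Ico hj hx).2

theorem stefanField_zero (hc : IsStableMagnetization β c) (hj : j < 0) :
    stefanField β c j 0 = magneticField β c :=
  congrArg (magneticField β) (hc.isSlowness hj).travelPosition_zero

theorem tanh_mul_add_stefanField (hc : IsStableMagnetization β c) (hj : j < 0)
    (hx : x ∈ Ico 0 (stefanLength β c j)) :
    Real.tanh (β * (stefanMagnetization β c j x + stefanField β c j x)) =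
      stefanMagnetization β c j x :=
  tanh_mul_add_magneticField hc.beta_pos.ne' (hc.mem_Ioo (hc.stefanMagnetization_mem_Ico hj hx))

theorem hasDerivAt_stefanField (hc : IsStableMagnetization β c) (hj : j < 0)
    (hx : x ∈ Ioo 0 (stefanLength β c j)) :
    HasDerivAt (stefanField β c j) ((-j) / chi β (stefanMagnetization β c j x)) x := by
  have hm : stefanMagnetization β c j x ∈ Ioo c 1 := (hc.isSlowness hj).travelPosition_mem_Ioo hx
  have hm' := hc.mem_Ioo (Ioo_subset_Ico_self hm)
  have hχ : chi β (stefanMagnetization β c j x) ≠ 0 := (chi_pos hc.beta_pos hm').ne'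
  have hχ' : 1 - chi β (stefanMagnetization β c j x) ≠ 0 := (sub_pos.2 (hc.chi_lt_one hm.1)).ne'
  refine ((hasDerivAt_magneticField hm').comp x
    ((hc.isSlowness hj).hasDerivAt_travelPosition hx)).congr_deriv ?_
  change ((chi β (stefanMagnetization β c j x))⁻¹ - 1) *
    ((1 - chi β (stefanMagnetization β c j x)) / (-j))⁻¹ = _
  field_simp

theorem integral_div_chi_stefanMagnetization (hc : IsStableMagnetization β c) (hj : j < 0)
    (hx : x ∈ Ico 0 (stefanLength β c j)) :
    ∫ y in (0 : ℝ)..x, (-j) / chi β (stefanMagnetization β c j y) =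
      stefanField β c j x - magneticField β c := by
  have hsub : Icc 0 x ⊆ Ico 0 (stefanLength β c j) := Icc_subset_Ico_right hx.2
  have hint : IntervalIntegrable (fun y => (-j) / chi β (stefanMagnetization β c j y)) volume 0 x :=
    (continuousOn_const.div (continuous_chi.comp_continuousOn
      ((hc.continuousOn_stefanMagnetization hj).mono hsub)) fun y hy =>
        (chi_pos hc.beta_pos (hc.mem_Ioo
          (hc.stefanMagnetization_mem_Ico hj (hsub hy)))).ne').intervalIntegrable_of_Icc hx.1
  rw [← hc.stefanField_zero hj]
  exact intervalIntegral.integral_eq_sub_of_hasDerivAt_of_le hx.1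
    ((hc.continuousOn_stefanField hj).mono hsub)
    (fun y hy => hc.hasDerivAt_stefanField hj ⟨hy.1, hy.2.trans hx.2⟩) hint

end IsStableMagnetization

end

/-- the maximal solution of the stationary Stefan problem with current `j < 0`. -/
theorem stmt_0 (β mβ : ℝ) (hβ : 1 < β) (hmβpos : 0 < mβ)
    (hmβ : mβ = Real.tanh (β * mβ)) :
    ∃ L : ℝ → ℝ,
      (∀ j : ℝ, j < 0 →
        (0 < L j ∧
        ∃ m h : ℝ → ℝ,
          ContinuousOn m (Ioo 0 (L j)) ∧ ContinuousOn h (Ioo 0 (L j)) ∧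
          StrictMonoOn m (Ioo 0 (L j)) ∧ StrictMonoOn h (Ioo 0 (L j)) ∧
          (∀ x ∈ Ioo (0:ℝ) (L j),
            m x ∈ Ico mβ 1 ∧ 0 ≤ h x ∧
            h x = (∫ y in (0:ℝ)..x, (-j) / chi β (m y)) ∧
            m x = Real.tanh (β * (m x + h x))) ∧
          Tendsto m (𝓝[<] (L j)) (𝓝 1) ∧
          Tendsto h (𝓝[<] (L j)) atTop)) ∧
      Tendsto L atBot (𝓝 0) ∧ Tendsto L (𝓝[<] (0:ℝ)) atTop := by
  have hstable : IsStableMagnetization β mβ :=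
    isStableMagnetization_of_eq_tanh (one_pos.trans hβ) hmβpos hmβ
  have hfield : magneticField β mβ = 0 :=
    magneticField_eq_zero_of_eq_tanh hstable.beta_pos.ne' hmβ
  refine ⟨stefanLength β mβ, fun j hj => ⟨hstable.stefanLength_pos hj, stefanMagnetization β mβ j,
    stefanField β mβ j, (hstable.continuousOn_stefanMagnetization hj).mono Ioo_subset_Ico_self,
    (hstable.continuousOn_stefanField hj).mono Ioo_subset_Ico_self,
    (hstable.strictMonoOn_stefanMagnetization hj).mono Ioo_subset_Ico_self,
    (hstable.strictMonoOn_stefanField hj).mono Ioo_subset_Ico_self, fun x hx => ?_,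
    hstable.tendsto_stefanMagnetization hj, hstable.tendsto_stefanField_atTop hj⟩,
    tendsto_stefanLength_atBot β mβ, hstable.tendsto_stefanLength_nhdsLT_zero⟩
  have hx' : x ∈ Ico 0 (stefanLength β mβ j) := Ioo_subset_Ico_self hx
  refine ⟨hstable.stefanMagnetization_mem_Ico hj hx', ?_, ?_,
    (hstable.tanh_mul_add_stefanField hj hx').symm⟩
  · rw [← hfield, ← hstable.stefanField_zero hj]
    exact (hstable.strictMonoOn_stefanField hj).monotoneOn
      (left_mem_Ico.2 (hstable.stefanLength_pos hj)) hx' hx'.1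
  · rw [hstable.integral_div_chi_stefanMagnetization hj hx', hfield, sub_zero]
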